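/- In the lattice-of-functionals setting, let m be a nonzero integer with m | 2HH′², and let b ∈ X satisfy m | H′·b(k) (i.e. b(k)/ε′ is a multiple of m) for every k ∈ K. Then ∑_{a∈X} ε₀·exp(−2πi·ε·∑_{k∈K} a(k)·b(k))·exp(−iπm·ε·∑_{k∈K} a(k)²) = C_{im}·exp(iπ·(ε/m)·∑_{k∈K} b(k)²), where C_{im} = (√(m/2)·(1 + i^{2HH′²/m})/(1 + i))^{H²} if m > 0, and C_{im} = (√(−m/2)·(1 + (−i)^{2HH′²/(−m)})/(1 − i))^{H²} if m < 0. -/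

import Mathlib

/-- The canonical integer representative `z` of `u ∈ ℤ/(HH′²)ℤ` with
`−HH′²/2 ≤ z < HH′²/2`, so that the point of `L′` corresponding to `u` is `ε′z = z/H′`. -/
def lift' (H H' : ℕ) (u : ZMod (H * H' ^ 2)) : ℤ :=
  if (u.val : ℤ) < ((H : ℤ) * (H' : ℤ) ^ 2) / 2 then (u.val : ℤ)
  else (u.val : ℤ) - (H : ℤ) * (H' : ℤ) ^ 2

/-- The rational point `ε′z ∈ L′ ⊆ ℚ ⊆ ℂ` corresponding to `u ∈ ℤ/(HH′²)ℤ`. -/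
noncomputable def val' (H H' : ℕ) (u : ZMod (H * H' ^ 2)) : ℂ :=
  (lift' H H' u : ℂ) / (H' : ℂ)

/-- `ε₀ = (HH′²)^{−H²/2} = |X|^{−1/2}`. -/
noncomputable def eps0 (H H' : ℕ) (K : Type) [Fintype K] [DecidableEq K]
    [NeZero H] [NeZero H'] : ℂ :=
  (Real.sqrt (Fintype.card (K → ZMod (H * H' ^ 2))) : ℂ)⁻¹

/-!
The sum over `X` factors over the coordinates `k ∈ K`. In one coordinate, with `N = HH′²` and
`b = m c`, completing the square turns the summand into `e^{-πi m (n + c)² / N} e^{πi b² / (m N)}`,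
and since the first factor is `N`-periodic in `n` the sum is a quadratic Gauss sum modulo `N`.

That Gauss sum is evaluated by Landsberg–Schaar reciprocity: near the cusp `a/c` the theta function
behaves like `w^{-1/2} G(a, c) / c`, so comparing both sides of `θ(-1/τ) = (-iτ)^{1/2} θ(τ)` as
`τ → -p/q` gives `G(q, p) = (i p/q)^{1/2} G(-p, q)`. As `|m|` divides `2N`, the dual sum modulo
`|m|` is over a `2`-periodic function, hence elementary.
-/

open Complex Filter Topology
open scoped Real

theorem tendsto_jacobiTheta₂_comap_im_atTop (z : ℂ) :
    Tendsto (jacobiTheta₂ z) (comap im atTop) (𝓝 1) := by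
  have him : Tendsto im (comap im atTop) atTop := tendsto_comap
  have hlim : ∑' n : ℤ, (if n = 0 then (1 : ℂ) else 0) = 1 := tsum_ite_eq 0 _
  rw [← hlim]
  refine tendsto_tsum_of_dominated_convergence
    (bound := fun n : ℤ => Real.exp (-π * (1 * n ^ 2 - 2 * |z.im| * |n|))) ?_ ?_ ?_
  · simpa only [pow_zero, one_mul] using
      summable_pow_mul_jacobiTheta₂_term_bound |z.im| one_pos 0
  · intro n
    obtain rfl | hn := eq_or_ne n 0
    · simpa [jacobiTheta₂_term] using tendsto_const_nhds
    · rw [if_neg hn, tendsto_zero_iff_norm_tendsto_zero]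
      simp only [norm_jacobiTheta₂_term]
      have hneg : -π * (n : ℝ) ^ 2 < 0 := by
        have : 0 < π * (n : ℝ) ^ 2 := by positivity
        linarith
      exact Real.tendsto_exp_atBot.comp
        (tendsto_atBot_add_const_right _ _ (him.const_mul_atTop_of_neg hneg))
  · filter_upwards [him.eventually_ge_atTop 1] with τ hτ n
    exact norm_jacobiTheta₂_term_le one_pos le_rfl hτ n

theorem exp_neg_mul_sq_add_eq (a ρ : ℂ) (n : ℤ) :
    cexp (-π * a * (n + ρ) ^ 2)
      = cexp (-π * a * ρ ^ 2) * jacobiTheta₂_term n (I * a * ρ) (I * a) := by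
  rw [jacobiTheta₂_term, ← Complex.exp_add]
  congr 1
  linear_combination (-π * (2 * n * a * ρ + n ^ 2 * a)) * I_sq

theorem summable_exp_neg_mul_sq_add {a : ℂ} (ha : 0 < a.re) (ρ : ℂ) :
    Summable fun n : ℤ => cexp (-π * a * (n + ρ) ^ 2) := by
  simp only [exp_neg_mul_sq_add_eq]
  exact ((summable_jacobiTheta₂_term_iff _ _).2 (by simpa using ha)).mul_left _

theorem cpow_half_mul_tsum_exp_neg_mul_sq_add {a : ℂ} (ha : 0 < a.re) (ρ : ℂ) :
    a ^ (1 / 2 : ℂ) * ∑' n : ℤ, cexp (-π * a * (n + ρ) ^ 2) = jacobiTheta₂ ρ (I / a) := by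
  have ha0 : a ≠ 0 := by rintro rfl; simp at ha
  have harg : a.arg ≠ π := by
    rw [Ne, arg_eq_pi_iff]
    exact fun h => h.1.not_gt ha
  have hroot : (-I * (I / a)) ^ (1 / 2 : ℂ) = (a ^ (1 / 2 : ℂ))⁻¹ := by
    rw [← inv_cpow _ _ harg]
    congr 1
    field_simp
    simp
  have hexp : -π * I * ρ ^ 2 / (I / a) = -π * a * ρ ^ 2 := by field_simp
  have hz : ρ / (I / a) = -(I * a * ρ) := by field_simp; simp
  have hτ : -1 / (I / a) = I * a := by field_simp; simp
  rw [jacobiTheta₂_functional_equation, hroot, hexp, hz, hτ, jacobiTheta₂_neg_left]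
  simp only [exp_neg_mul_sq_add_eq, tsum_mul_left, jacobiTheta₂]
  simp only [one_div, inv_inv, mul_assoc]

theorem inv_re_pos_iff {a : ℂ} : 0 < a⁻¹.re ↔ 0 < a.re := by
  obtain rfl | ha := eq_or_ne a 0
  · simp
  · rw [inv_re, div_pos_iff_of_pos_right (normSq_pos.mpr ha)]

theorem tendsto_cpow_half_mul_tsum_exp_neg_mul_sq_add (ρ : ℂ) :
    Tendsto (fun a : ℂ => a ^ (1 / 2 : ℂ) * ∑' n : ℤ, cexp (-π * a * (n + ρ) ^ 2))
      (comap (fun a => a⁻¹.re) atTop) (𝓝 1) := by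
  have hinv : Tendsto (fun a : ℂ => a⁻¹.re) (comap (fun a => a⁻¹.re) atTop) atTop :=
    tendsto_comap
  have hτ : Tendsto (fun a => I / a) (comap (fun a => a⁻¹.re) atTop) (comap im atTop) := by
    rw [tendsto_comap_iff]
    refine hinv.congr fun a => ?_
    simp [div_eq_mul_inv]
  refine ((tendsto_jacobiTheta₂_comap_im_atTop ρ).comp hτ).congr' ?_
  filter_upwards [hinv.eventually_gt_atTop 0] with a ha
  exact (cpow_half_mul_tsum_exp_neg_mul_sq_add (inv_re_pos_iff.1 ha) ρ).symm

theorem hasSum_int_of_residues {A : Type*} [AddCommMonoid A] [TopologicalSpace A]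
    [ContinuousAdd A] (M : ℕ) [NeZero M] {g : ℤ → A} {s : ℕ → A}
    (hg : ∀ r < M, HasSum (fun n : ℤ => g (n * M + r)) (s r)) :
    HasSum g (∑ r ∈ Finset.range M, s r) := by
  rw [Finset.sum_range, ← (Int.divModEquiv M).symm.hasSum_iff]
  have hfibre (r : Fin M) : HasSum
      (fun p : ℤ × Fin M => if p.2 = r then g (p.1 * M + p.2) else 0) (s r) := by
    rw [← (Prod.mk_left_injective r).hasSum_iff]
    · simpa [Function.comp_def] using hg r r.isLt
    · rintro ⟨n, t⟩ hnt
      exact if_neg fun h : t = r => hnt ⟨n, by rw [h]⟩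
  convert! hasSum_sum fun r (_ : r ∈ Finset.univ) => hfibre r using 1
  ext p
  simp [Int.divModEquiv_symm_apply]

theorem ofReal_mul_cpow {t : ℝ} (ht : 0 ≤ t) (c s : ℂ) :
    ((t : ℂ) * c) ^ s = (t : ℂ) ^ s * c ^ s := by
  obtain rfl | hs := eq_or_ne s 0
  · simp
  obtain rfl | ht := ht.eq_or_lt
  · simp [hs]
  obtain rfl | hc := eq_or_ne c 0
  · simp [hs]
  have ht' : (t : ℂ) ≠ 0 := by exact_mod_cast ht.ne'
  rw [cpow_def_of_ne_zero (mul_ne_zero ht' hc), cpow_def_of_ne_zero ht', cpow_def_of_ne_zero hc,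
    log_ofReal_mul ht hc, ofReal_log ht.le, add_mul, Complex.exp_add]

theorem tendsto_ofReal_mul_comap_inv_re {t : ℝ} (ht : 0 < t) :
    Tendsto (fun a : ℂ => (t : ℂ) * a) (comap (fun a => a⁻¹.re) atTop)
      (comap (fun a => a⁻¹.re) atTop) := by
  rw [tendsto_comap_iff]
  refine (tendsto_comap.const_mul_atTop (inv_pos.2 ht)).congr fun a => ?_
  simp only [Function.comp_apply, mul_inv, ← ofReal_inv, re_ofReal_mul]

theorem hasSum_periodic_mul_exp_neg_mul_sq {M : ℕ} [NeZero M] {f : ℤ → ℂ}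
    (hf : Function.Periodic f M) {a : ℂ} (ha : 0 < a.re) :
    HasSum (fun n : ℤ => f n * cexp (-π * a * n ^ 2))
      (∑ r ∈ Finset.range M,
        f r * ∑' n : ℤ, cexp (-π * (((M ^ 2 : ℝ) : ℂ) * a) * (n + r / M) ^ 2)) := by
  have hM : (M : ℂ) ≠ 0 := NeZero.ne _
  have hre : 0 < (((M ^ 2 : ℝ) : ℂ) * a).re := by
    rw [re_ofReal_mul]
    have : 0 < M := NeZero.pos M
    positivity
  have hterm (r : ℕ) (n : ℤ) : f (n * M + r) * cexp (-π * a * (n * M + r : ℤ) ^ 2)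
      = f r * cexp (-π * (((M ^ 2 : ℝ) : ℂ) * a) * (n + r / M) ^ 2) := by
    have hper : f (n * M + r) = f r := by simpa [add_comm] using hf.int_mul n r
    rw [hper]
    push_cast
    congr 2
    field_simp
  refine hasSum_int_of_residues M fun r _ => ?_
  simp only [hterm]
  exact (summable_exp_neg_mul_sq_add hre _).hasSum.mul_left _

theorem tendsto_cpow_half_mul_tsum_periodic {M : ℕ} [NeZero M] {f : ℤ → ℂ}
    (hf : Function.Periodic f M) :
    Tendsto (fun a : ℂ => a ^ (1 / 2 : ℂ) * ∑' n : ℤ, f n * cexp (-π * a * n ^ 2))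
      (comap (fun a => a⁻¹.re) atTop) (𝓝 ((∑ r ∈ Finset.range M, f r) / M)) := by
  have hM : (M : ℂ) ≠ 0 := NeZero.ne _
  have hM0 : (0 : ℝ) < M := by exact_mod_cast NeZero.pos M
  have hlim := tendsto_finsetSum (Finset.range M) fun r _ =>
    ((tendsto_cpow_half_mul_tsum_exp_neg_mul_sq_add (r / M)).comp
      (tendsto_ofReal_mul_comap_inv_re (pow_pos hM0 2))).const_mul (f r / M)
  simp only [mul_one, ← Finset.sum_div] at hlim
  refine hlim.congr' ?_
  filter_upwards [tendsto_comap.eventually_gt_atTop 0] with a ha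
  have hroot : (((M ^ 2 : ℝ) : ℂ) * a) ^ (1 / 2 : ℂ) = M * a ^ (1 / 2 : ℂ) := by
    rw [ofReal_mul_cpow (by positivity), ofReal_pow, ofReal_natCast, one_div,
      Complex.sq_cpow_two_inv (by exact_mod_cast hM0)]
  rw [(hasSum_periodic_mul_exp_neg_mul_sq hf (inv_re_pos_iff.1 ha)).tsum_eq, Finset.mul_sum]
  refine Finset.sum_congr rfl fun r _ => ?_
  rw [Function.comp_apply, hroot]
  field_simp

/-- The quadratic exponential `n ↦ e^{πi a n² / c}`, the summand of `quadGaussSum`. With `πi`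
instead of `2πi` in the exponent, it is `c`-periodic only when `a c` is even. -/
noncomputable def quadPhase (a : ℤ) (c : ℕ) (n : ℤ) : ℂ := cexp (π * I * a * n ^ 2 / c)

/-- The quadratic Gauss sum `G(a, c) = ∑_{0 ≤ n < c} e^{πi a n² / c}`, in the normalization in which
reciprocity exchanges `G(q, p)` and `G(-p, q)`. -/
noncomputable def quadGaussSum (a : ℤ) (c : ℕ) : ℂ := ∑ n ∈ Finset.range c, quadPhase a c n

theorem periodic_quadPhase {a : ℤ} {c : ℕ} [NeZero c] (h : Even (a * c)) :
    Function.Periodic (quadPhase a c) c := by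
  obtain ⟨t, ht⟩ := h
  have ht' : (a : ℂ) * c = t + t := by exact_mod_cast ht
  have hc : (c : ℂ) ≠ 0 := NeZero.ne _
  intro n
  rw [quadPhase, quadPhase, Complex.exp_eq_exp_iff_exists_int]
  refine ⟨a * n + t, ?_⟩
  push_cast
  field_simp
  linear_combination (c : ℂ) * ht'

theorem conj_quadGaussSum (a : ℤ) (c : ℕ) :
    starRingEnd ℂ (quadGaussSum a c) = quadGaussSum (-a) c := by
  simp [quadGaussSum, quadPhase, ← exp_conj]

theorem tendsto_cpow_half_mul_jacobiTheta {a : ℤ} {c : ℕ} [NeZero c] (h : Even (a * c)) :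
    Tendsto (fun w : ℂ => w ^ (1 / 2 : ℂ) * jacobiTheta (a / c + I * w))
      (comap (fun w => w⁻¹.re) atTop) (𝓝 (quadGaussSum a c / c)) := by
  refine (tendsto_cpow_half_mul_tsum_periodic (periodic_quadPhase h)).congr fun w => ?_
  congr 1
  refine tsum_congr fun n => ?_
  rw [quadPhase, ← Complex.exp_add]
  congr 1
  linear_combination (-π * n ^ 2 * w) * I_sq

theorem jacobiTheta_neg_one_div {τ : ℂ} (hτ : 0 < τ.im) :
    jacobiTheta (-1 / τ) = (-I * τ) ^ (1 / 2 : ℂ) * jacobiTheta τ := by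
  have h := jacobiTheta_S_smul ⟨τ, hτ⟩
  rw [UpperHalfPlane.modular_S_smul] at h
  simpa [neg_div] using h

theorem tendsto_ofReal_comap_inv_re :
    Tendsto (fun ε : ℝ => (ε : ℂ)) (𝓝[>] 0) (comap (fun w => w⁻¹.re) atTop) := by
  rw [tendsto_comap_iff]
  exact tendsto_inv_nhdsGT_zero.congr fun ε => by simp

-- `τ ↦ -1/τ` maps the vertical ray `-r + iε` to the circular arc `r⁻¹ + iw` with this non-real `w`,
-- hence cusp asymptotics along `Re w⁻¹ → ∞` instead of `w → 0⁺`.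
theorem tendsto_mul_inv_comap_inv_re {r : ℝ} (hr : r ≠ 0) :
    Tendsto (fun ε : ℝ => (ε : ℂ) * (r * (r - I * ε))⁻¹) (𝓝[>] 0)
      (comap (fun w => w⁻¹.re) atTop) := by
  rw [tendsto_comap_iff]
  refine (tendsto_inv_nhdsGT_zero.const_mul_atTop (by positivity : 0 < r ^ 2)).congr' ?_
  filter_upwards [self_mem_nhdsWithin] with ε hε
  have hinv : ((ε : ℂ) * (r * (r - I * ε))⁻¹)⁻¹ = ((r ^ 2 * ε⁻¹ : ℝ) : ℂ) + (-r : ℝ) * I := by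
    have : (ε : ℂ) ≠ 0 := ofReal_ne_zero.2 (ne_of_gt hε)
    rw [mul_inv, inv_inv]
    push_cast
    field_simp
    ring
  rw [Function.comp_apply, hinv, add_re, ofReal_re, re_ofReal_mul, I_re, mul_zero, add_zero]

theorem cpow_half_mul_jacobiTheta_inv_add {r ε : ℝ} (hr : r ≠ 0) (hε : 0 < ε) :
    (ε * (r * (r - I * ε))⁻¹ : ℂ) ^ (1 / 2 : ℂ) *
          jacobiTheta ((r : ℂ)⁻¹ + I * (ε * (r * (r - I * ε))⁻¹))
      = (r * (r - I * ε) : ℂ)⁻¹ ^ (1 / 2 : ℂ) * (r * I + ε) ^ (1 / 2 : ℂ) *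
          ((ε : ℂ) ^ (1 / 2 : ℂ) * jacobiTheta (-r + I * ε)) := by
  have him : (-r + I * ε : ℂ).im = ε := by simp
  have hr' : (r : ℂ) ≠ 0 := ofReal_ne_zero.2 hr
  have hτ : (-r + I * ε : ℂ) ≠ 0 := fun h => hε.ne' <| by rw [← him, h, zero_im]
  have hτ' : (r - I * ε : ℂ) ≠ 0 := fun h => hτ (by linear_combination -h)
  have hcusp : (r : ℂ)⁻¹ + I * (ε * (r * (r - I * ε))⁻¹) = -1 / (-r + I * ε) := by
    rw [show (-r + I * ε : ℂ) = -(r - I * ε) by ring, neg_div_neg_eq]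
    field_simp
    ring
  have hrot : -I * (-r + I * ε) = r * I + ε := by linear_combination (-ε : ℂ) * I_sq
  rw [hcusp, jacobiTheta_neg_one_div (him.symm ▸ hε), ofReal_mul_cpow hε.le, hrot]
  ring

theorem tendsto_cpow_half_mul_cpow_half {r : ℝ} (hr : 0 < r) :
    Tendsto (fun ε : ℝ => (r * (r - I * ε) : ℂ)⁻¹ ^ (1 / 2 : ℂ) * (r * I + ε) ^ (1 / 2 : ℂ))
      (𝓝[>] 0) (𝓝 ((r : ℂ)⁻¹ * (r * I) ^ (1 / 2 : ℂ))) := by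
  have hr' : (r : ℂ) ≠ 0 := ofReal_ne_zero.2 hr.ne'
  have hslit : (r * I : ℂ) ∈ slitPlane := Or.inr (by simpa using hr.ne')
  have hroot : ((r * r : ℂ)⁻¹) ^ (1 / 2 : ℂ) = (r : ℂ)⁻¹ := by
    rw [← sq, ← inv_pow, one_div, Complex.sq_cpow_two_inv (by simpa [← ofReal_inv] using hr)]
  have hcont : ContinuousAt (fun ε : ℝ => (r * (r - I * ε) : ℂ)⁻¹ ^ (1 / 2 : ℂ) *
      (r * I + ε) ^ (1 / 2 : ℂ)) 0 := by
    refine .mul (.cpow (.inv₀ (by fun_prop) (by simpa using hr')) continuousAt_const ?_)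
      (.cpow (by fun_prop) continuousAt_const (by simpa using hslit))
    have : ((r * r : ℂ)⁻¹) = ((r * r)⁻¹ : ℝ) := by push_cast; rfl
    simp only [ofReal_zero, mul_zero, sub_zero, this, ofReal_mem_slitPlane]
    positivity
  simpa only [ofReal_zero, mul_zero, sub_zero, add_zero, hroot] using
    hcont.tendsto.mono_left nhdsWithin_le_nhds

theorem quadGaussSum_reciprocity {p q : ℕ} [NeZero p] [NeZero q] (h : Even (p * q)) :
    quadGaussSum q p = (p / q * I) ^ (1 / 2 : ℂ) * quadGaussSum (-p) q := by
  have hp : (p : ℂ) ≠ 0 := NeZero.ne _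
  have hq : (q : ℂ) ≠ 0 := NeZero.ne _
  have h' : Even ((p : ℤ) * q) := by exact_mod_cast h
  have hr : (0 : ℝ) < p / q := div_pos (by exact_mod_cast NeZero.pos p)
    (by exact_mod_cast NeZero.pos q)
  have hleft := (tendsto_cpow_half_mul_jacobiTheta (a := -p) (c := q)
    (by simpa using h')).comp tendsto_ofReal_comap_inv_re
  have hright := (tendsto_cpow_half_mul_jacobiTheta (a := q) (c := p)
    (by rwa [mul_comm])).comp (tendsto_mul_inv_comap_inv_re hr.ne')
  have hlim := tendsto_nhds_unique
    (((tendsto_cpow_half_mul_cpow_half hr).mul hleft).congr' ?_) hright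
  · push_cast at hlim
    generalize (p / q * I : ℂ) ^ (1 / 2 : ℂ) = s at hlim ⊢
    field_simp at hlim
    exact hlim.symm
  · filter_upwards [self_mem_nhdsWithin] with ε hε
    have := cpow_half_mul_jacobiTheta_inv_add hr.ne' hε
    push_cast [inv_div] at this ⊢
    simpa only [Function.comp_apply, Int.cast_natCast, Int.cast_neg, neg_div] using this.symm

theorem cpow_half_mul_I {t : ℝ} (ht : 0 < t) :
    (t * I : ℂ) ^ (1 / 2 : ℂ) = √(2 * t) / (1 - I) := by
  have hI : (1 - I : ℂ) ≠ 0 := fun h => by simpa using congrArg re h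
  have hsq : (t * I : ℂ) = (√(2 * t) / (1 - I)) ^ 2 := by
    have hs : (√(2 * t) : ℂ) ^ 2 = 2 * t := by
      rw [← ofReal_pow, Real.sq_sqrt (by positivity)]
      push_cast
      rfl
    rw [div_pow, eq_div_iff (pow_ne_zero 2 hI), hs]
    linear_combination (t * (I - 2) : ℂ) * I_sq
  have hre : 0 < ((√(2 * t) : ℂ) / (1 - I)).re := by
    have : (√(2 * t) : ℂ) / (1 - I) = ((√(2 * t) / 2 : ℝ) : ℂ) * (1 + I) := by
      rw [div_eq_iff hI]
      push_cast
      linear_combination (√(2 * t) / 2 : ℂ) * I_sq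
    rw [this, re_ofReal_mul]
    simpa using ht
  rw [hsq, one_div, Complex.sq_cpow_two_inv hre]

theorem sum_range_mul_of_periodic {A : Type*} [AddCommMonoid A] {q : ℕ} {f : ℤ → A}
    (hf : Function.Periodic f q) (k : ℕ) :
    ∑ r ∈ Finset.range (k * q), f r = k • ∑ r ∈ Finset.range q, f r := by
  induction k with
  | zero => simp
  | succ k ih =>
    have hshift (r : ℕ) : f ((k * q + r : ℕ) : ℤ) = f r := by
      simpa [add_comm] using hf.int_mul k r
    simp only [Nat.succ_mul, Finset.sum_range_add, ih, hshift, succ_nsmul]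

theorem sum_zmod_of_periodic {A : Type*} [AddCommMonoid A] {N : ℕ} [NeZero N] {f : ℤ → A}
    (hf : Function.Periodic f N) {L : ZMod N → ℤ} (hL : ∀ u, (L u : ZMod N) = u) (c : ℤ) :
    ∑ u : ZMod N, f (L u + c) = ∑ r ∈ Finset.range N, f r := by
  have hmod (z : ℤ) : f z = f (z : ZMod N).val := by
    rw [ZMod.val_intCast, Int.emod_def, mul_comm]
    exact (hf.sub_int_mul_eq _).symm
  calc ∑ u : ZMod N, f (L u + c) = ∑ u : ZMod N, f ((u + c).val : ℤ) :=
        Finset.sum_congr rfl fun u _ => by rw [hmod, Int.cast_add, hL]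
    _ = ∑ u : ZMod N, f u.val :=
        Equiv.sum_comp (Equiv.addRight (c : ZMod N)) fun u : ZMod N => f (u.val : ℤ)
    _ = ∑ r ∈ Finset.range N, f r := Finset.sum_nbij' ZMod.val (fun n => (n : ZMod N))
        (fun u _ => Finset.mem_range.2 (ZMod.val_lt u)) (fun _ _ => Finset.mem_univ _)
        (fun u _ => ZMod.natCast_zmod_val u)
        (fun n hn => ZMod.val_cast_of_lt (Finset.mem_range.mp hn)) (fun _ _ => rfl)

theorem periodic_quadPhase_two {a q : ℤ} {c : ℕ} [NeZero c] (h : c * q = 2 * a) :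
    Function.Periodic (quadPhase a c) (2 : ℕ) := by
  have h' : (c : ℂ) * q = 2 * a := by exact_mod_cast h
  have hc : (c : ℂ) ≠ 0 := NeZero.ne _
  intro n
  rw [quadPhase, quadPhase, Complex.exp_eq_exp_iff_exists_int]
  refine ⟨q * (n + 1), ?_⟩
  push_cast
  field_simp
  linear_combination (-2 * (n + 1) : ℂ) * h'

theorem quadPhase_one {a q : ℤ} {c : ℕ} [NeZero c] (h : c * q = 2 * a) :
    quadPhase a c 1 = I ^ q := by
  have h' : (c : ℂ) * q = 2 * a := by exact_mod_cast h
  have hc : (c : ℂ) ≠ 0 := NeZero.ne _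
  have hI : I ^ q = cexp (q * (π / 2 * I)) := by rw [exp_int_mul, exp_pi_div_two_mul_I]
  rw [quadPhase, hI]
  congr 1
  push_cast
  field_simp
  linear_combination -h'

theorem two_mul_quadGaussSum {a q : ℤ} {c : ℕ} [NeZero c] (hpar : Even (a * c))
    (h : c * q = 2 * a) : 2 * quadGaussSum a c = c * (1 + I ^ q) := by
  -- The sum of `quadPhase a c` over `2c` terms is evaluated with period `c` and with period `2`.
  have h₁ := sum_range_mul_of_periodic (periodic_quadPhase hpar) 2
  have h₂ := sum_range_mul_of_periodic (periodic_quadPhase_two h) c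
  have h0 : quadPhase a c 0 = 1 := by simp [quadPhase]
  rw [mul_comm, h₁] at h₂
  simpa [Finset.sum_range_succ, h0, quadPhase_one h, quadGaussSum, mul_add] using h₂

theorem sqrt_mul_half_of_mul_eq {c N q : ℝ} (hN : 0 ≤ N) (hc : 0 ≤ c) (hq : 0 ≤ q)
    (h : c * q = 2 * N) : √q * (c / 2) = √N * √(c / 2) := by
  rw [← Real.sqrt_mul hN, show N * (c / 2) = q * (c / 2) ^ 2 by
    linear_combination (-c / 4) * h, Real.sqrt_mul hq, Real.sqrt_sq (by positivity)]

theorem quadGaussSum_of_mul_eq {c N q : ℕ} [NeZero c] [NeZero N] (hpar : Even (c * N))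
    (h : c * q = 2 * N) :
    quadGaussSum c N = √N * (√((c : ℝ) / 2) * (1 + (-I) ^ q) / (1 - I)) := by
  have hc : (0 : ℝ) < c := by exact_mod_cast NeZero.pos c
  have hN : (0 : ℝ) < N := by exact_mod_cast NeZero.pos N
  have h' : (c : ℝ) * q = 2 * N := by exact_mod_cast h
  have hpar' : Even (-(N : ℤ) * c) := by
    rw [neg_mul, even_neg, mul_comm]
    exact_mod_cast hpar
  have hroot : (N / c * I : ℂ) ^ (1 / 2 : ℂ) = √q / (1 - I) := by
    have := cpow_half_mul_I (div_pos hN hc)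
    rw [show 2 * ((N : ℝ) / c) = q by field_simp; linarith] at this
    simpa using this
  have hsqrt : (√q * (c / 2) : ℂ) = √N * √((c : ℝ) / 2) := by
    simpa using congrArg ((↑) : ℝ → ℂ)
      (sqrt_mul_half_of_mul_eq hN.le hc.le q.cast_nonneg h')
  have hq : (c : ℤ) * -q = 2 * -N := by
    rw [mul_neg, mul_neg, neg_inj]
    exact_mod_cast h
  have hdual := two_mul_quadGaussSum hpar' hq
  rw [zpow_neg, zpow_natCast, ← inv_pow, inv_I] at hdual
  rw [quadGaussSum_reciprocity (by rwa [mul_comm]), hroot]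
  linear_combination (√q / (1 - I) / 2 : ℂ) * hdual + ((1 + (-I) ^ q) / (1 - I)) * hsqrt

/-- The one-coordinate factor of the constant `C_{im}`, for `N = HH′²`: that constant is
`gaussConst N m ^ card K`. The integer divisions in the exponents are exact when `m ∣ 2N`. -/
noncomputable def gaussConst (N : ℕ) (m : ℤ) : ℂ :=
  if 0 < m then √((m : ℝ) / 2) * (1 + I ^ (2 * (N : ℤ) / m)) / (1 + I)
  else √(-(m : ℝ) / 2) * (1 + (-I) ^ (2 * (N : ℤ) / (-m))) / (1 - I)

theorem gaussConst_natCast {c N q : ℕ} [NeZero c] (h : c * q = 2 * N) :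
    gaussConst N c = √((c : ℝ) / 2) * (1 + I ^ q) / (1 + I) := by
  have hc : 0 < c := NeZero.pos c
  have hq : 2 * (N : ℤ) / c = q := Int.ediv_eq_of_eq_mul_right (by omega) (by exact_mod_cast h.symm)
  rw [gaussConst, if_pos (by exact_mod_cast hc), hq, zpow_natCast, Int.cast_natCast]

theorem gaussConst_neg_natCast {c N q : ℕ} [NeZero c] (h : c * q = 2 * N) :
    gaussConst N (-c) = √((c : ℝ) / 2) * (1 + (-I) ^ q) / (1 - I) := by
  have hc : 0 < c := NeZero.pos c
  have hq : 2 * (N : ℤ) / c = q := Int.ediv_eq_of_eq_mul_right (by omega) (by exact_mod_cast h.symm)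
  rw [gaussConst, if_neg (by omega), neg_neg, hq, zpow_natCast, Int.cast_neg, neg_neg,
    Int.cast_natCast]

theorem quadGaussSum_neg {N : ℕ} [NeZero N] {m : ℤ} (hdvd : m ∣ 2 * N) (hpar : Even (m * N)) :
    quadGaussSum (-m) N = √N * gaussConst N m := by
  have hdvd' : m.natAbs ∣ 2 * N := by simpa [Int.natAbs_mul] using Int.natAbs_dvd_natAbs.2 hdvd
  obtain ⟨q, hq⟩ := hdvd'
  have : NeZero m.natAbs := ⟨fun h0 => NeZero.ne N (by simpa [h0] using hq)⟩
  have hpar' : Even (m.natAbs * N) := by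
    simpa [Int.natAbs_mul] using Int.natAbs_even.2 hpar
  have hG := quadGaussSum_of_mul_eq hpar' hq.symm
  obtain hm | hm := m.natAbs_eq
  · rw [hm, ← conj_quadGaussSum, hG, gaussConst_natCast hq.symm]
    simp
  · rw [hm, neg_neg, hG, gaussConst_neg_natCast hq.symm]

theorem sum_zmod_fourier_quadratic {N : ℕ} [NeZero N] {m : ℤ} (hdvd : m ∣ 2 * N)
    (hpar : Even (m * N)) {L : ZMod N → ℤ} (hL : ∀ u, (L u : ZMod N) = u) {z : ℤ} (hz : m ∣ z) :
    ∑ u, cexp (-(2 * π * I * L u * z / N)) * cexp (-(π * I * m * L u ^ 2 / N))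
      = √N * gaussConst N m * cexp (π * I * z ^ 2 / (m * N)) := by
  obtain ⟨c, rfl⟩ := hz
  have hm : (m : ℂ) ≠ 0 := by
    intro h
    obtain rfl : m = 0 := by exact_mod_cast h
    simp [NeZero.ne N] at hdvd
  have hN : (N : ℂ) ≠ 0 := NeZero.ne _
  have hsq (u : ZMod N) : cexp (-(2 * π * I * L u * (m * c : ℤ) / N)) *
      cexp (-(π * I * m * L u ^ 2 / N))
        = quadPhase (-m) N (L u + c) * cexp (π * I * (m * c : ℤ) ^ 2 / (m * N)) := by
    rw [quadPhase, ← Complex.exp_add, ← Complex.exp_add]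
    congr 1
    push_cast
    field_simp
    ring
  simp only [hsq]
  rw [← Finset.sum_mul, sum_zmod_of_periodic (periodic_quadPhase (by simpa using hpar)) hL,
    ← quadGaussSum_neg hdvd hpar, quadGaussSum]

theorem intCast_lift' (H H' : ℕ) [NeZero H] [NeZero H'] (u : ZMod (H * H' ^ 2)) :
    (lift' H H' u : ZMod (H * H' ^ 2)) = u := by
  have h0 : (H : ZMod (H * H' ^ 2)) * (H' : ZMod (H * H' ^ 2)) ^ 2 = 0 := by
    exact_mod_cast ZMod.natCast_self (H * H' ^ 2)
  unfold lift'
  split_ifs <;> simp [h0]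

theorem inv_mul_val'_mul_val' {H H' : ℕ} (u v : ZMod (H * H' ^ 2)) :
    (H : ℂ)⁻¹ * (val' H H' u * val' H H' v)
      = lift' H H' u * lift' H H' v / (H * H' ^ 2 : ℕ) := by
  simp only [val']
  push_cast
  field_simp

theorem sum_exp_val' {H H' : ℕ} [NeZero H] [NeZero H'] {m : ℤ}
    (hdvd : m ∣ 2 * (H * H' ^ 2 : ℕ)) (hpar : Even (m * (H * H' ^ 2 : ℕ)))
    {v : ZMod (H * H' ^ 2)} (hv : m ∣ lift' H H' v) :
    ∑ u, cexp (-(2 * π * I * (H : ℂ)⁻¹ * (val' H H' u * val' H H' v))) *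
        cexp (-(π * I * m * (H : ℂ)⁻¹ * val' H H' u ^ 2))
      = √(H * H' ^ 2 : ℕ) * gaussConst (H * H' ^ 2) m *
          cexp (π * I * (H : ℂ)⁻¹ / m * val' H H' v ^ 2) := by
  convert! sum_zmod_fourier_quadratic hdvd hpar (intCast_lift' H H') hv using 3 with u
  · congr 1
    linear_combination (-2 * π * I) * inv_mul_val'_mul_val' u v
  · congr 1
    linear_combination (-π * I * m) * inv_mul_val'_mul_val' u u
  · linear_combination (π * I / m) * inv_mul_val'_mul_val' v v

theorem eps0_eq (H H' : ℕ) [NeZero H] [NeZero H'] (K : Type) [Fintype K] [DecidableEq K] :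
    eps0 H H' K = ((√(H * H' ^ 2 : ℕ) : ℂ) ^ Fintype.card K)⁻¹ := by
  have hsqrt : √((H * H' ^ 2 : ℕ) ^ Fintype.card K) = √(H * H' ^ 2 : ℕ) ^ Fintype.card K := by
    rw [Real.sqrt_eq_iff_mul_self_eq (by positivity) (by positivity), ← mul_pow,
      Real.mul_self_sqrt (by positivity)]
  rw [eps0, Fintype.card_fun, ZMod.card, Nat.cast_pow, hsqrt, ofReal_pow]

theorem fourier_imaginary_gaussian_functional_general (H H' : ℕ) [NeZero H] [NeZero H']
    (K : Type) [Fintype K] [DecidableEq K] (m : ℤ)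
    (hdvd : m ∣ 2 * (H * H' ^ 2 : ℕ)) (hpar : Even (m * (H * H' ^ 2 : ℕ)))
    (b : K → ZMod (H * H' ^ 2)) (hb : ∀ k, m ∣ lift' H H' (b k)) :
    ∑ a : K → ZMod (H * H' ^ 2), eps0 H H' K *
        cexp (-(2 * π * I * (H : ℂ)⁻¹ * ∑ k, val' H H' (a k) * val' H H' (b k))) *
        cexp (-(π * I * m * (H : ℂ)⁻¹ * ∑ k, val' H H' (a k) ^ 2))
      = gaussConst (H * H' ^ 2) m ^ Fintype.card K *
        cexp (π * I * (H : ℂ)⁻¹ / m * ∑ k, val' H H' (b k) ^ 2) := by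
  let factor (u v : ZMod (H * H' ^ 2)) : ℂ :=
    cexp (-(2 * π * I * (H : ℂ)⁻¹ * (val' H H' u * val' H H' v))) *
      cexp (-(π * I * m * (H : ℂ)⁻¹ * val' H H' u ^ 2))
  have hsqrt : (√(H * H' ^ 2 : ℕ) : ℂ) ≠ 0 := by
    rw [ofReal_ne_zero, Real.sqrt_ne_zero']
    exact_mod_cast NeZero.pos (H * H' ^ 2)
  calc _ = ∑ a : K → ZMod (H * H' ^ 2), eps0 H H' K * ∏ k, factor (a k) (b k) := by
        simp only [factor, Finset.prod_mul_distrib, ← Complex.exp_sum, Finset.sum_neg_distrib,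
          Finset.mul_sum, mul_assoc]
    _ = eps0 H H' K * ∏ k, ∑ u, factor u (b k) := by
        rw [← Finset.mul_sum, Fintype.prod_sum]
    _ = eps0 H H' K * ∏ k, (√(H * H' ^ 2 : ℕ) * gaussConst (H * H' ^ 2) m *
          cexp (π * I * (H : ℂ)⁻¹ / m * val' H H' (b k) ^ 2)) := by
        simp only [factor, sum_exp_val' hdvd hpar (hb _)]
    _ = _ := by
        rw [Finset.prod_mul_distrib, Finset.prod_const, Finset.card_univ, ← Complex.exp_sum,
          ← Finset.mul_sum, eps0_eq, mul_pow]
        field_simp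

/-- The infinitesimal Fourier transformation of the functional
`g_{im}(a) = exp(−iπm·ε·∑_k a(k)²)` for a nonzero integer `m` with `m ∣ 2HH′²`,
at `b ∈ X` with `m ∣ b(k)/ε′` for all `k`:
`(Fg_{im})(b) = C_{im}·exp(iπ·(ε/m)·∑_k b(k)²)`, with `C_{im}` a Gauss-sum constant. -/
theorem fourier_imaginary_gaussian_functional (H H' : ℕ) [NeZero H] [NeZero H']
    (hH : Even H) (hH' : Even H') (K : Type) [Fintype K] [DecidableEq K]
    (hK : Fintype.card K = H ^ 2) (m : ℤ) (hm : m ≠ 0)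
    (hdvd : m ∣ 2 * (H : ℤ) * (H' : ℤ) ^ 2)
    (b : K → ZMod (H * H' ^ 2)) (hb : ∀ k, m ∣ lift' H H' (b k)) :
    ∑ a : K → ZMod (H * H' ^ 2), eps0 H H' K *
        Complex.exp (-(2 * Real.pi * Complex.I * (H : ℂ)⁻¹ *
          ∑ k, val' H H' (a k) * val' H H' (b k))) *
        Complex.exp (-(Real.pi * Complex.I * (m : ℂ) * (H : ℂ)⁻¹ *
          ∑ k, val' H H' (a k) ^ 2))
      = (if 0 < m then
            ((Real.sqrt ((m : ℝ) / 2) : ℂ) *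
                (1 + Complex.I ^ (2 * (H : ℤ) * (H' : ℤ) ^ 2 / m)) / (1 + Complex.I)) ^ (H ^ 2)
          else
            ((Real.sqrt ((-m : ℝ) / 2) : ℂ) *
                (1 + (-Complex.I) ^ (2 * (H : ℤ) * (H' : ℤ) ^ 2 / (-m))) / (1 - Complex.I)) ^ (H ^ 2))
        * Complex.exp (Real.pi * Complex.I * (H : ℂ)⁻¹ / (m : ℂ) *
            ∑ k, val' H H' (b k) ^ 2) := by
  simpa only [gaussConst, ite_pow, hK, Nat.cast_mul, Nat.cast_pow, ← mul_assoc] using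
    fourier_imaginary_gaussian_functional_general H H' K m (by push_cast; rwa [← mul_assoc])
      (by exact_mod_cast ((hH.mul_right (H' ^ 2)).natCast (α := ℤ)).mul_left m) b hb
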